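/- Let (u_l, u_f) be a finite Stackelberg game with utilities in [0,1], n ≥ 2 follower actions, and inducibility gap Δ > 0, and let 0 < δ < Δ. Then there exists a leader strategy x̂ ∈ Δ^m such that min_{j ∈ BR_δ(x̂)} u_l(x̂, j) ≥ (1 − δ/Δ)·u_SSE; consequently min_{j ∈ BR_δ(x̂)} u_l(x̂, j) ≥ u_RSE(δ) − δ/Δ, i.e., x̂ is a (δ/Δ)-optimal δ-RSE leader strategy. (The paper's construction takes x̂ = (1 − δ/Δ)·x* + (δ/Δ)·x^{j*}, where (x*, j*) is an SSE and x^{j*} induces j* with margin Δ; this x̂ satisfies BR_δ(x̂) = {j*}.) -/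

import Mathlib

/-!
Let `(x, j)` be a strong Stackelberg equilibrium, and let `y` induce the response `j` with margin
`Δ`. The follower's advantage of `j` over any other action is linear in the leader's strategy, at
least `0` at `x` and at least `Δ` at `y`, hence at least `δ` at `(1 - δ / Δ) x + (δ / Δ) y`.
There `j` is therefore the only `δ`-optimal response, and the leader keeps the fraction `1 - δ / Δ`
of the equilibrium utility, which in turn bounds the `δ`-robust utility from above.
-/

open Finset Set

noncomputable section

/-- The simplex of mixed strategies over `m` actions. -/
def simplex (m : ℕ) : Set (Fin m → ℝ) := stdSimplex ℝ (Fin m)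

/-- Mixed-strategy extension of a utility matrix: `u(x, j) = ∑ i, x i * u i j`. -/
def mixU {m n : ℕ} (u : Fin m → Fin n → ℝ) (x : Fin m → ℝ) (j : Fin n) : ℝ :=
  ∑ i, x i * u i j

/-- The follower's δ-optimal response set (strict inequality):
`BR_δ(x) = {j : u_f(x,j) > max_{j'} u_f(x,j') - δ}`. -/
def BRd {m n : ℕ} (uf : Fin m → Fin n → ℝ) (δ : ℝ) (x : Fin m → ℝ) : Set (Fin n) :=
  {j | mixU uf x j > (⨆ j', mixU uf x j') - δ}

/-- The follower's exact best-response set. -/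
def BR0 {m n : ℕ} (uf : Fin m → Fin n → ℝ) (x : Fin m → ℝ) : Set (Fin n) :=
  {j | mixU uf x j = ⨆ j', mixU uf x j'}

/-- Worst-case leader utility over the follower's δ-optimal response set:
`min_{j ∈ BR_δ(x)} u_l(x, j)`. -/
def valBR {m n : ℕ} (ul uf : Fin m → Fin n → ℝ) (δ : ℝ) (x : Fin m → ℝ) : ℝ :=
  sInf (mixU ul x '' BRd uf δ x)

/-- The δ-RSE leader utility `u_RSE(δ) = sup_{x ∈ Δ^m} min_{j ∈ BR_δ(x)} u_l(x, j)`. -/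
def uRSE {m n : ℕ} (ul uf : Fin m → Fin n → ℝ) (δ : ℝ) : ℝ :=
  sSup (valBR ul uf δ '' simplex m)

/-- The SSE leader utility `u_SSE = sup_{x ∈ Δ^m} max_{j ∈ BR_0(x)} u_l(x, j)`. -/
def uSSE {m n : ℕ} (ul uf : Fin m → Fin n → ℝ) : ℝ :=
  sSup ((fun x => sSup (mixU ul x '' BR0 uf x)) '' simplex m)

/-- The maximin leader utility `u_MM = sup_{x ∈ Δ^m} min_{j ∈ [n]} u_l(x, j)`. -/
def uMM {m n : ℕ} (ul : Fin m → Fin n → ℝ) : ℝ :=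
  sSup ((fun x => ⨅ j, mixU ul x j) '' simplex m)

/-- The inducibility gap
`Δ = min_{j} sup_{x ∈ Δ^m} min_{j' ≠ j} (u_f(x, j) - u_f(x, j'))`. -/
def indGap {m n : ℕ} (uf : Fin m → Fin n → ℝ) : ℝ :=
  ⨅ j, sSup ((fun x => ⨅ j' : {k : Fin n // k ≠ j}, (mixU uf x j - mixU uf x j'.1)) '' simplex m)

variable {m n : ℕ} {ul uf : Fin m → Fin n → ℝ} {x y : Fin m → ℝ} {j : Fin n} {δ ε : ℝ}

theorem continuous_ciInf_of_finite {ι X α : Type*} [Finite ι] [TopologicalSpace X]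
    [ConditionallyCompleteLattice α] [TopologicalSpace α] [ContinuousInf α] {f : ι → X → α}
    (hf : ∀ i, Continuous (f i)) : Continuous fun x => ⨅ i, f i x := by
  have := Fintype.ofFinite ι
  cases isEmpty_or_nonempty ι
  · simpa only [iInf_of_isEmpty] using continuous_const
  · simpa only [← Finset.inf'_univ_eq_ciInf] using
      Continuous.finset_inf'_apply _ fun i _ => hf i

theorem isCompact_simplex (m : ℕ) : IsCompact (simplex m) :=
  isCompact_stdSimplex ℝ (Fin m)

theorem continuous_mixU (u : Fin m → Fin n → ℝ) (j : Fin n) : Continuous fun x => mixU u x j := by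
  unfold mixU
  fun_prop

theorem continuous_uncurry_mixU (u : Fin m → Fin n → ℝ) :
    Continuous fun p : (Fin m → ℝ) × Fin n => mixU u p.1 p.2 :=
  continuous_prod_of_discrete_right.2 (continuous_mixU u)

theorem mixU_smul_add_smul (u : Fin m → Fin n → ℝ) (x y : Fin m → ℝ) (s t : ℝ) (j : Fin n) :
    mixU u (s • x + t • y) j = s * mixU u x j + t * mixU u y j := by
  simp only [mixU, Pi.add_apply, Pi.smul_apply, smul_eq_mul, add_mul, mul_assoc,
    Finset.sum_add_distrib, Finset.mul_sum]

theorem mixU_mem_of_convex {u : Fin m → Fin n → ℝ} {s : Set ℝ} (hs : Convex ℝ s)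
    (hx : x ∈ simplex m) (hu : ∀ i, u i j ∈ s) : mixU u x j ∈ s :=
  hs.sum_mem (fun i _ => hx.1 i) hx.2 fun i _ => hu i

theorem mixU_le_ciSup (u : Fin m → Fin n → ℝ) (x : Fin m → ℝ) (j : Fin n) :
    mixU u x j ≤ ⨆ k, mixU u x k :=
  le_ciSup (Set.finite_range _).bddAbove j

theorem mem_BR0_iff_forall_le : j ∈ BR0 uf x ↔ ∀ k, mixU uf x k ≤ mixU uf x j := by
  have : Nonempty (Fin n) := ⟨j⟩
  exact ⟨fun hj k => (mixU_le_ciSup uf x k).trans_eq (Eq.symm hj),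
    fun h => le_antisymm (mixU_le_ciSup uf x j) (ciSup_le h)⟩

theorem BR0_nonempty [Nonempty (Fin n)] (uf : Fin m → Fin n → ℝ) (x : Fin m → ℝ) :
    (BR0 uf x).Nonempty :=
  exists_eq_ciSup_of_finite

theorem BR0_subset_BRd (hδ : 0 < δ) : BR0 uf x ⊆ BRd uf δ x :=
  fun _ hj => (sub_lt_self _ hδ).trans_eq (Eq.symm hj)

/-- The strategy `x` induces the follower action `j` with margin `ε`: against `x`, the action `j` is
better than every other one by at least `ε`. Margin `0` means that `j` is a best response. -/
def Induces (uf : Fin m → Fin n → ℝ) (ε : ℝ) (x : Fin m → ℝ) (j : Fin n) : Prop :=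
  ∀ k, k ≠ j → mixU uf x k + ε ≤ mixU uf x j

theorem induces_zero_of_mem_BR0 (hj : j ∈ BR0 uf x) : Induces uf 0 x j := fun k _ => by
  simpa only [add_zero] using mem_BR0_iff_forall_le.1 hj k

namespace Induces

theorem smul_add_smul {s t : ℝ} (hs : 0 ≤ s) (ht : 0 ≤ t) (hx : Induces uf δ x j)
    (hy : Induces uf ε y j) : Induces uf (s * δ + t * ε) (s • x + t • y) j := by
  intro k hk
  simp only [mixU_smul_add_smul]
  linarith [mul_le_mul_of_nonneg_left (hx k hk) hs, mul_le_mul_of_nonneg_left (hy k hk) ht]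

theorem mem_BR0 (hε : 0 ≤ ε) (h : Induces uf ε x j) : j ∈ BR0 uf x := by
  refine mem_BR0_iff_forall_le.2 fun k => ?_
  obtain rfl | hk := eq_or_ne k j
  · exact le_rfl
  · exact (le_add_of_nonneg_right hε).trans (h k hk)

theorem BRd_eq_singleton (hδ : 0 < δ) (h : Induces uf δ x j) : BRd uf δ x = {j} := by
  refine Set.Subset.antisymm (fun k hk => ?_)
    (Set.singleton_subset_iff.2 (BR0_subset_BRd hδ (h.mem_BR0 hδ.le)))
  by_contra hkj
  have hlt : (⨆ l, mixU uf x l) - δ < mixU uf x k := hk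
  linarith [h k hkj, mixU_le_ciSup uf x j]

theorem valBR_eq (hδ : 0 < δ) (h : Induces uf δ x j) : valBR ul uf δ x = mixU ul x j := by
  rw [valBR, h.BRd_eq_singleton hδ, Set.image_singleton, csInf_singleton]

end Induces

/-- The graph of the follower's best-response correspondence over the mixed strategies, that is, the
set of pairs among which a strong Stackelberg equilibrium maximizes the leader's utility. -/
def bestResponseGraph (uf : Fin m → Fin n → ℝ) : Set ((Fin m → ℝ) × Fin n) :=
  {p | p.1 ∈ simplex m ∧ p.2 ∈ BR0 uf p.1}

theorem isCompact_bestResponseGraph (uf : Fin m → Fin n → ℝ) :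
    IsCompact (bestResponseGraph uf) := by
  have hclosed : IsClosed {p : (Fin m → ℝ) × Fin n | p.2 ∈ BR0 uf p.1} := by
    simp only [mem_BR0_iff_forall_le, Set.ofPred_forall]
    exact isClosed_iInter fun k =>
      isClosed_le ((continuous_mixU uf k).comp continuous_fst) (continuous_uncurry_mixU uf)
  convert ((isCompact_simplex m).prod isCompact_univ).inter_right hclosed using 1
  ext p
  simp [bestResponseGraph]

theorem bestResponseGraph_nonempty [Nonempty (Fin n)] (hm : (simplex m).Nonempty)
    (uf : Fin m → Fin n → ℝ) : (bestResponseGraph uf).Nonempty :=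
  let ⟨x, hx⟩ := hm
  let ⟨j, hj⟩ := BR0_nonempty uf x
  ⟨(x, j), hx, hj⟩

theorem isGreatest_uSSE [Nonempty (Fin n)] (hm : (simplex m).Nonempty)
    (ul uf : Fin m → Fin n → ℝ) :
    IsGreatest ((fun p => mixU ul p.1 p.2) '' bestResponseGraph uf) (uSSE ul uf) := by
  obtain ⟨v, hv⟩ := ((isCompact_bestResponseGraph uf).image
    (continuous_uncurry_mixU ul)).exists_isGreatest ((bestResponseGraph_nonempty hm uf).image _)
  have hle : ∀ z ∈ simplex m, ∀ k ∈ BR0 uf z, mixU ul z k ≤ v := fun z hz k hk =>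
    hv.2 ⟨(z, k), ⟨hz, hk⟩, rfl⟩
  obtain ⟨⟨x, j⟩, ⟨hx, hj⟩, hxj⟩ := hv.1
  have hinner : sSup (mixU ul x '' BR0 uf x) = v :=
    IsGreatest.csSup_eq ⟨⟨j, hj, hxj⟩, Set.forall_mem_image.2 (hle x hx)⟩
  have houter : uSSE ul uf = v :=
    IsGreatest.csSup_eq ⟨⟨x, hx, hinner⟩, Set.forall_mem_image.2 fun z hz =>
      csSup_le ((BR0_nonempty uf z).image _) (Set.forall_mem_image.2 (hle z hz))⟩
  rwa [houter]

theorem valBR_le_of_mem_BRd (hj : j ∈ BRd uf δ x) : valBR ul uf δ x ≤ mixU ul x j :=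
  csInf_le (Set.toFinite _).bddBelow ⟨j, hj, rfl⟩

theorem uRSE_le_uSSE [Nonempty (Fin n)] (hm : (simplex m).Nonempty) (ul uf : Fin m → Fin n → ℝ)
    (hδ : 0 < δ) : uRSE ul uf δ ≤ uSSE ul uf := by
  refine csSup_le (hm.image _) (Set.forall_mem_image.2 fun x hx => ?_)
  obtain ⟨j, hj⟩ := BR0_nonempty uf x
  calc valBR ul uf δ x ≤ mixU ul x j := valBR_le_of_mem_BRd (BR0_subset_BRd hδ hj)
    _ ≤ uSSE ul uf := (isGreatest_uSSE hm ul uf).2 ⟨(x, j), ⟨hx, hj⟩, rfl⟩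

-- Real suprema and infima of empty families are `0`, so a positive gap excludes `m = 0`, `n = 0`.
theorem simplex_nonempty_of_indGap_pos (hΔ : 0 < indGap uf) : (simplex m).Nonempty := by
  by_contra! h
  simp [indGap, h] at hΔ

theorem nonempty_of_indGap_pos (hΔ : 0 < indGap uf) : Nonempty (Fin n) := by
  by_contra! h
  simp [indGap] at hΔ

theorem exists_induces_indGap (hΔ : 0 < indGap uf) (j : Fin n) :
    ∃ y ∈ simplex m, Induces uf (indGap uf) y j := by
  let margin (x : Fin m → ℝ) : ℝ := ⨅ k : {k : Fin n // k ≠ j}, (mixU uf x j - mixU uf x k.1)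
  have hmargin : Continuous margin := continuous_ciInf_of_finite fun k =>
    (continuous_mixU uf j).sub (continuous_mixU uf k.1)
  obtain ⟨y, hy, hsup⟩ := (isCompact_simplex m).exists_sSup_image_eq
    (simplex_nonempty_of_indGap_pos hΔ) hmargin.continuousOn
  refine ⟨y, hy, fun k hk => le_sub_iff_add_le'.1 ?_⟩
  calc indGap uf ≤ sSup (margin '' simplex m) := ciInf_le (Set.finite_range _).bddBelow j
    _ = margin y := hsup
    _ ≤ mixU uf y j - mixU uf y k :=
      ciInf_le (Set.finite_range _).bddBelow (⟨k, hk⟩ : {k : Fin n // k ≠ j})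

theorem approx_rse_strategy_general {a b : ℝ} (hul : ∀ i j, ul i j ∈ Set.Icc a b) (hδ : 0 < δ)
    (hδΔ : δ ≤ indGap uf) :
    ∃ x ∈ simplex m,
      (1 - δ / indGap uf) * uSSE ul uf + δ / indGap uf * a ≤ valBR ul uf δ x ∧
      uRSE ul uf δ - δ / indGap uf * (b - a) ≤ valBR ul uf δ x := by
  have hΔ : 0 < indGap uf := hδ.trans_le hδΔ
  have hm := simplex_nonempty_of_indGap_pos hΔ
  have := nonempty_of_indGap_pos hΔ
  obtain ⟨⟨x, j⟩, ⟨hx, hj⟩, hSSE : mixU ul x j = uSSE ul uf⟩ := (isGreatest_uSSE hm ul uf).1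
  obtain ⟨y, hy, hyj⟩ := exists_induces_indGap hΔ j
  set t := δ / indGap uf
  have ht₀ : 0 ≤ t := by positivity
  have ht₁ : 0 ≤ 1 - t := sub_nonneg.2 ((div_le_one hΔ).2 hδΔ)
  have hind : Induces uf δ ((1 - t) • x + t • y) j := by
    simpa [t, hΔ.ne'] using (induces_zero_of_mem_BR0 hj).smul_add_smul ht₁ ht₀ hyj
  refine ⟨(1 - t) • x + t • y, convex_stdSimplex ℝ (Fin m) hx hy ht₁ ht₀ (sub_add_cancel 1 t), ?_⟩
  rw [hind.valBR_eq hδ, mixU_smul_add_smul, hSSE]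
  have ha : t * a ≤ t * mixU ul y j :=
    mul_le_mul_of_nonneg_left (mixU_mem_of_convex (convex_Icc a b) hy (hul · j)).1 ht₀
  have hb : t * uSSE ul uf ≤ t * b :=
    mul_le_mul_of_nonneg_left (hSSE ▸ (mixU_mem_of_convex (convex_Icc a b) hx (hul · j)).2) ht₀
  constructor <;> linarith [uRSE_le_uSSE hm ul uf hδ]

/-- there is a `(δ/Δ)`-optimal δ-RSE leader strategy with value at least
`(1 − δ/Δ)·u_SSE`. -/
theorem approx_rse_strategy (m n : ℕ) (hn : 2 ≤ n) (ul uf : Fin m → Fin n → ℝ)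
    (hul : ∀ i j, ul i j ∈ Set.Icc (0:ℝ) 1) (huf : ∀ i j, uf i j ∈ Set.Icc (0:ℝ) 1)
    (hΔ : 0 < indGap uf) (δ : ℝ) (hδ : 0 < δ) (hδΔ : δ < indGap uf) :
    ∃ x ∈ simplex m,
      (1 - δ / indGap uf) * uSSE ul uf ≤ valBR ul uf δ x ∧
      uRSE ul uf δ - δ / indGap uf ≤ valBR ul uf δ x := by
  simpa using approx_rse_strategy_general hul hδ hδΔ.le
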